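/- For every m ≥ 2 and all indices 0 ≤ i,j,s,t ≤ m−1, the entries of R^(m) satisfy the two contraction identities: ∑_{k,l=0}^{m−1} R^(m)_{ij,lk}(x,y) R^(m)_{kl,st}(y,z) = R^(m)_{ij,st}(x,z), and ∑_{k,l=0}^{m−1} R^(m)_{ij,lk}(y,z) R^(m)_{kl,st}(x,y) = R^(m)_{ij,st}(x,z). -/

import Mathlib

noncomputable section
open scoped BigOperators

variable {F : Type*}

/-- `x ⊖ y := (x - y)/(1 + β·y)`. -/
def om [Field F] (β x y : F) : F := (x - y) / (1 + β * y)

/-- `⊖ t := -t/(1 + β·t)`. -/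
def negOm [Field F] (β t : F) : F := (-t) / (1 + β * t)

/-- The R-matrix `R^{(n)}(x,y)` on `V ⊗ V`, `V = F^n`, with entries
`R_{ij,kl} = (1 + [k<l]·β(x⊖y)) δ_{il} δ_{jk} + [k>l]·(x⊖y) δ_{ik} δ_{jl}`;
the row index is the pair `(i,j)`, the column index is the pair `(k,l)`. -/
def Rmat [Field F] (n : ℕ) (β x y : F) :
    Matrix (Fin n × Fin n) (Fin n × Fin n) F := Matrix.of fun p q =>
  (if p.1 = q.2 ∧ p.2 = q.1 then (if q.1 < q.2 then 1 + β * om β x y else 1) else 0) +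
  (if p.1 = q.1 ∧ p.2 = q.2 ∧ q.2 < q.1 then om β x y else 0)

/-!
Composing `R(x, y)` with the flip of `V ⊗ V` gives `1 + (x ⊖ y) T`, where `T` satisfies the
quadratic relation `T² = β T`. Hence `(1 + u T) (1 + v T) = 1 + (u + v + β u v) T`, and both
contraction identities reduce to `u + v + β u v = x ⊖ z` for `u = x ⊖ y` and `v = y ⊖ z`,
i.e. to the multiplicativity of `1 + β (x ⊖ y) = (1 + β x) / (1 + β y)`.
-/

theorem one_add_smul_mul_one_add_smul {S A : Type*} [CommSemiring S] [Semiring A] [Algebra S A]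
    {β : S} {T : A} (hT : T * T = β • T) (u v : S) :
    (1 + u • T) * (1 + v • T) = 1 + (u + v + β * u * v) • T := by
  simp only [add_mul, mul_add, one_mul, mul_one, smul_mul_smul_comm, hT]
  module

theorem one_add_mul_ne_zero_of_algebraicIndependent {ι S A : Type*} [CommRing S] [Nontrivial S]
    [CommRing A] [Algebra S A] {v : ι → A} (hv : AlgebraicIndependent S v) (i j : ι) :
    1 + v i * v j ≠ 0 := by
  intro h
  have hpoly : (1 + MvPolynomial.X i * MvPolynomial.X j : MvPolynomial ι S) = 0 :=
    algebraicIndependent_iff.mp hv _ (by simpa using h)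
  simpa using congrArg (MvPolynomial.eval 0) hpoly

theorem om_add_om_add_mul [Field F] {β y z : F} (hy : 1 + β * y ≠ 0) (hz : 1 + β * z ≠ 0)
    (x : F) : om β x y + om β y z + β * om β x y * om β y z = om β x z := by
  have hxy : om β x y * (1 + β * y) = x - y := div_mul_cancel₀ _ hy
  have hyz : om β y z * (1 + β * z) = y - z := div_mul_cancel₀ _ hz
  refine (eq_div_iff hz).mpr ?_
  linear_combination hxy + (1 + β * om β x y) * hyz

section heckeMatrix

variable (ι : Type*) {S : Type*} [LinearOrder ι] [Semiring S]

/-- The matrix of the operator `T` on `V ⊗ V`, for `V` with basis indexed by `ι`, such that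
`1 + (x ⊖ y) T` is `R(x, y)` composed with the flip. Basis vectors of `V ⊗ V` are indexed by
pairs, and the flip acts on indices as `Prod.swap`. -/
def heckeMatrix (β : S) : Matrix (ι × ι) (ι × ι) S := Matrix.of fun p q =>
  if p.2 < p.1 then (if p = q then β else 0) + (if p.swap = q then 1 else 0) else 0

theorem heckeMatrix_mul_apply [Fintype ι] {κ : Type*} (β : S) (M : Matrix (ι × ι) κ S)
    (p : ι × ι) (q : κ) :
    (heckeMatrix ι β * M) p q = if p.2 < p.1 then β * M p q + M p.swap q else 0 := by
  split_ifs with hp <;>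
    simp [heckeMatrix, Matrix.mul_apply, hp, add_mul, Finset.sum_add_distrib]

theorem heckeMatrix_mul_self [Fintype ι] (β : S) :
    heckeMatrix ι β * heckeMatrix ι β = β • heckeMatrix ι β := by
  ext p q
  rw [heckeMatrix_mul_apply, Matrix.smul_apply, smul_eq_mul]
  split_ifs with hp
  · have hswap : heckeMatrix ι β p.swap q = 0 := by simp [heckeMatrix, hp.le]
    rw [hswap, add_zero]
  · simp [heckeMatrix, hp]

end heckeMatrix

theorem Rmat_eq_submatrix_swap [Field F] (m : ℕ) (β x y : F) :
    Rmat m β x y = (1 + om β x y • heckeMatrix (Fin m) β).submatrix id Prod.swap := by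
  ext ⟨i, j⟩ ⟨k, l⟩
  simp only [Rmat, heckeMatrix, Matrix.of_apply, Matrix.submatrix_apply, Matrix.add_apply,
    Matrix.smul_apply, Matrix.one_apply, id, Prod.swap_prod_mk, Prod.mk.injEq, smul_eq_mul]
  grind

theorem sum_Rmat_mul_Rmat [Field F] (m : ℕ) (β x y x' y' : F) (i j s t : Fin m) :
    ∑ k : Fin m, ∑ l : Fin m, Rmat m β x y (i, j) (l, k) * Rmat m β x' y' (k, l) (s, t) =
      (1 + (om β x y + om β x' y' + β * om β x y * om β x' y') • heckeMatrix (Fin m) β)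
        (i, j) (t, s) := by
  rw [← one_add_smul_mul_one_add_smul (heckeMatrix_mul_self (Fin m) β), Matrix.mul_apply,
    Fintype.sum_prod_type]
  simp only [Rmat_eq_submatrix_swap, Matrix.submatrix_apply, id, Prod.swap_prod_mk]

theorem R_contraction_general [Field F] (m : ℕ) (β x y z : F)
    (hy : 1 + β * y ≠ 0) (hz : 1 + β * z ≠ 0) :
    (∀ i j s t : Fin m,
        ∑ k : Fin m, ∑ l : Fin m,
          Rmat m β x y (i, j) (l, k) * Rmat m β y z (k, l) (s, t) =
            Rmat m β x z (i, j) (s, t)) ∧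
    (∀ i j s t : Fin m,
        ∑ k : Fin m, ∑ l : Fin m,
          Rmat m β y z (i, j) (l, k) * Rmat m β x y (k, l) (s, t) =
            Rmat m β x z (i, j) (s, t)) := by
  have hxz := om_add_om_add_mul hy hz x
  have hxz' : om β y z + om β x y + β * om β y z * om β x y = om β x z := by
    rw [← hxz]
    ring
  constructor <;> intro i j s t
  · rw [sum_Rmat_mul_Rmat, hxz, Rmat_eq_submatrix_swap]
    rfl
  · rw [sum_Rmat_mul_Rmat, hxz', Rmat_eq_submatrix_swap]
    rfl

/-- **Contraction identities** for the entries of `R^{(m)}`: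
`∑_{k,l} R^{(m)}_{ij,lk}(x,y) R^{(m)}_{kl,st}(y,z) = R^{(m)}_{ij,st}(x,z)` and
`∑_{k,l} R^{(m)}_{ij,lk}(y,z) R^{(m)}_{kl,st}(x,y) = R^{(m)}_{ij,st}(x,z)`. -/
theorem R_contraction [Field F] [CharZero F] (m : ℕ) (hm : 2 ≤ m) (β x y z : F)
    (hind : AlgebraicIndependent ℚ ![β, x, y, z]) :
    (∀ i j s t : Fin m,
        ∑ k : Fin m, ∑ l : Fin m,
          Rmat m β x y (i, j) (l, k) * Rmat m β y z (k, l) (s, t) =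
            Rmat m β x z (i, j) (s, t)) ∧
    (∀ i j s t : Fin m,
        ∑ k : Fin m, ∑ l : Fin m,
          Rmat m β y z (i, j) (l, k) * Rmat m β x y (k, l) (s, t) =
            Rmat m β x z (i, j) (s, t)) := by
  exact R_contraction_general m β x y z
    (one_add_mul_ne_zero_of_algebraicIndependent hind 0 2)
    (one_add_mul_ne_zero_of_algebraicIndependent hind 0 3)
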